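/- Let V be a finite index set, let β_v > 0, p_v > 0, λ_v > 0 for v ∈ V with Σ_{v∈V} β_v = 1. Let Q be a solution of the mean-field slotted-Aloha dynamical system started from the empty state, i.e., Q_{(v,k)}(0) = 1_{k=0} for every v ∈ V. Then Q is stochastically increasing in time: for every τ, h ≥ 0 and every v ∈ V, Q(τ)(v,·) ≤_st Q(τ+h)(v,·), i.e., Σ_{l=0}^k Q_{(v,l)}(τ) ≥ Σ_{l=0}^k Q_{(v,l)}(τ+h) for every k ∈ ℕ. -/

import Mathlib

/-!
Write `F v k τ = ∑_{l < k} Q v l τ`. Telescoping the equations gives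
`F v (k+1)' = -λ_v Q v k + p_v e^{-γ} Q v (k+1)`, so the gaps
`D v k τ = F v k τ - F v k (τ + h)` satisfy

`D v (k+1)' = λ_v (D v k - D v (k+1)) + p_v e^{-γ(τ)} (D v (k+2) - D v (k+1))`
`             + p_v (e^{-γ(τ)} - e^{-γ(τ+h)}) Q v (k+1) (τ+h)`,

where `γ(τ+h) - γ(τ) = ∑_w β_w p_w D w 1 τ`. This system is cooperative: a gap is pushed down only by
negative values of other gaps, with coefficients whose sum is bounded by a constant `K`. The gaps
start nonnegative because the initial state is empty, i.e. `F v (k+1) 0 = 1` is maximal.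

Infinitely many gaps are handled by a contraction in a weighted norm: if `D ≥ -M e^{Lτ}` for all
indices and times, with `L = 2K + 1`, then a barrier argument for each gap separately yields
`D ≥ -(M/2) e^{Lτ}` (`gap_halving`). Starting from `D ≥ -1` and iterating gives `D ≥ 0`.
-/

open Filter Set Real

/-- `γ(τ) = Σ_v β_v p_v (1 − Q_{(v,0)}(τ))`. -/
noncomputable def gammaFn {V : Type*} [Fintype V] (β p : V → ℝ)
    (Q : V → ℕ → ℝ → ℝ) (τ : ℝ) : ℝ :=
  ∑ v, β v * p v * (1 - Q v 0 τ)

/-- A solution of the mean-field slotted-Aloha dynamical system: a family of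
functions `Q v k : [0,∞) → [0,1]` summing to `1` over `k`, satisfying the
Kolmogorov ODEs on `[0,∞)`. -/
def IsMFSolution {V : Type*} [Fintype V] (β p lam : V → ℝ)
    (Q : V → ℕ → ℝ → ℝ) : Prop :=
  (∀ v k τ, 0 ≤ τ → Q v k τ ∈ Set.Icc (0:ℝ) 1) ∧
  (∀ v τ, 0 ≤ τ → HasSum (fun k => Q v k τ) 1) ∧
  (∀ v k τ, 0 ≤ τ → HasDerivWithinAt (Q v k)
    (lam v * ((if k = 0 then 0 else Q v (k-1) τ) - Q v k τ)
      + p v * Real.exp (-(gammaFn β p Q τ)) *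
        (Q v (k+1) τ - (if k = 0 then 0 else Q v k τ)))
    (Set.Ici (0:ℝ)) τ)


/-- The truncated mass `∑_{l < k} Q v l τ`; the cumulative distribution function at `k - 1`. -/
def cumMass {V : Type*} (Q : V → ℕ → ℝ → ℝ) (v : V) (k : ℕ) (τ : ℝ) : ℝ :=
  ∑ l ∈ Finset.range k, Q v l τ

/-- The gap between the cumulative masses at times `τ` and `τ + h`. -/
def massGap {V : Type*} (Q : V → ℕ → ℝ → ℝ) (h : ℝ) (v : V) (k : ℕ) (τ : ℝ) : ℝ :=
  cumMass Q v k τ - cumMass Q v k (τ + h)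

lemma massGap_sub {V : Type*} {Q : V → ℕ → ℝ → ℝ} (h : ℝ) (v : V) (k : ℕ) (τ : ℝ) :
    massGap Q h v (k + 1) τ - massGap Q h v k τ = Q v k τ - Q v k (τ + h) := by
  simp only [massGap, cumMass, Finset.sum_range_succ]
  ring

section

variable {V : Type*} [Fintype V] {β p lam : V → ℝ} {Q : V → ℕ → ℝ → ℝ}

lemma cumMass_mem_Icc (hQ : IsMFSolution β p lam Q) (v : V) (k : ℕ) {τ : ℝ} (hτ : 0 ≤ τ) :
    cumMass Q v k τ ∈ Set.Icc (0 : ℝ) 1 :=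
  ⟨Finset.sum_nonneg fun l _ => (hQ.1 v l τ hτ).1,
    sum_le_hasSum _ (fun l _ => (hQ.1 v l τ hτ).1) (hQ.2.1 v τ hτ)⟩

/-- The transport terms telescope: only the flow across the level `k` survives. -/
lemma cumMass_hasDerivWithinAt (hQ : IsMFSolution β p lam Q) (v : V) (k : ℕ) {τ : ℝ}
    (hτ : 0 ≤ τ) :
    HasDerivWithinAt (cumMass Q v (k + 1))
      (-(lam v * Q v k τ) + p v * Real.exp (-(gammaFn β p Q τ)) * Q v (k + 1) τ)
      (Set.Ici 0) τ := by
  induction k with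
  | zero =>
    have h0 := hQ.2.2 v 0 τ hτ
    have e : cumMass Q v (0 + 1) = Q v 0 := by
      funext t; simp [cumMass]
    rw [e]
    refine h0.congr_deriv ?_
    simp
  | succ k ih =>
    have h1 := ih.add (hQ.2.2 v (k + 1) τ hτ)
    have e : cumMass Q v (k + 1 + 1) = cumMass Q v (k + 1) + Q v (k + 1) := by
      funext t; simp [cumMass, Finset.sum_range_succ]
    rw [e]
    refine h1.congr_deriv ?_
    simp only [Nat.add_eq_zero_iff, one_ne_zero, and_false, if_false, Nat.add_sub_cancel]
    ring

lemma massGap_hasDerivWithinAt (hQ : IsMFSolution β p lam Q) {h : ℝ} (hh : 0 ≤ h) (v : V)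
    (k : ℕ) {τ : ℝ} (hτ : 0 ≤ τ) :
    HasDerivWithinAt (massGap Q h v (k + 1))
      ((-(lam v * Q v k τ) + p v * Real.exp (-(gammaFn β p Q τ)) * Q v (k + 1) τ)
        - (-(lam v * Q v k (τ + h))
          + p v * Real.exp (-(gammaFn β p Q (τ + h))) * Q v (k + 1) (τ + h)))
      (Set.Ici 0) τ := by
  have h1 := cumMass_hasDerivWithinAt hQ v k hτ
  have h2 := cumMass_hasDerivWithinAt hQ v k (add_nonneg hτ hh)
  have h3 : HasDerivWithinAt (fun t : ℝ => t + h) 1 (Set.Ici 0) τ :=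
    ((hasDerivAt_id τ).add_const h).hasDerivWithinAt
  have h4 := h2.comp τ h3 (fun t ht => add_nonneg ht hh)
  rw [mul_one] at h4
  exact h1.sub h4

lemma gammaFn_add_sub (h τ : ℝ) :
    gammaFn β p Q (τ + h) - gammaFn β p Q τ = ∑ w, β w * p w * massGap Q h w 1 τ := by
  simp only [gammaFn, ← Finset.sum_sub_distrib]
  refine Finset.sum_congr rfl fun w _ => ?_
  simp only [massGap, cumMass, Finset.sum_range_one]
  ring

lemma gammaFn_nonneg (hβ : ∀ v, 0 < β v) (hp : ∀ v, 0 < p v) (hQ : IsMFSolution β p lam Q)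
    {τ : ℝ} (hτ : 0 ≤ τ) : 0 ≤ gammaFn β p Q τ :=
  Finset.sum_nonneg fun v _ =>
    mul_nonneg (mul_pos (hβ v) (hp v)).le (sub_nonneg.2 (hQ.1 v 0 τ hτ).2)

/-- Cooperativity, quantitatively: where a gap is nonpositive, its derivative is bounded below by
the worst gap, `-m`, times the total coupling coefficient. -/
lemma massGap_deriv_lower (hβ : ∀ v, 0 < β v) (hp : ∀ v, 0 < p v) (hlam : ∀ v, 0 < lam v)
    (hQ : IsMFSolution β p lam Q) {h : ℝ} (hh : 0 ≤ h) (v : V) (k : ℕ) {τ m : ℝ} (hτ : 0 ≤ τ)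
    (hm : 0 ≤ m) (hD : ∀ w j, -m ≤ massGap Q h w j τ) (hneg : massGap Q h v (k + 1) τ ≤ 0) :
    -((lam v + p v + p v * ∑ w, β w * p w) * m) ≤
      (-(lam v * Q v k τ) + p v * Real.exp (-(gammaFn β p Q τ)) * Q v (k + 1) τ)
        - (-(lam v * Q v k (τ + h))
          + p v * Real.exp (-(gammaFn β p Q (τ + h))) * Q v (k + 1) (τ + h)) := by
  have hτh := add_nonneg hτ hh
  have e1 := massGap_sub (Q := Q) h v k τ
  have e2 := massGap_sub (Q := Q) h v (k + 1) τ
  have g := gammaFn_add_sub (β := β) (p := p) (Q := Q) h τ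
  have a1 : Real.exp (-(gammaFn β p Q τ)) ≤ 1 :=
    Real.exp_le_one_iff.2 (neg_nonpos.2 (gammaFn_nonneg hβ hp hQ hτ))
  have a2 : Real.exp (-(gammaFn β p Q (τ + h))) ≤ 1 :=
    Real.exp_le_one_iff.2 (neg_nonpos.2 (gammaFn_nonneg hβ hp hQ hτh))
  have hC : 0 ≤ ∑ w, β w * p w :=
    Finset.sum_nonneg fun w _ => (mul_pos (hβ w) (hp w)).le
  have hS : -((∑ w, β w * p w) * m) ≤ gammaFn β p Q (τ + h) - gammaFn β p Q τ := by
    rw [g, Finset.sum_mul, ← Finset.sum_neg_distrib]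
    refine Finset.sum_le_sum fun w _ => ?_
    have := mul_le_mul_of_nonneg_left (hD w 1) (mul_pos (hβ w) (hp w)).le
    linarith
  -- Convexity of `exp`: `e^{-γ(τ)} - e^{-γ(τ+h)} ≥ e^{-γ(τ+h)} (γ(τ+h) - γ(τ))`.
  have hE : -((∑ w, β w * p w) * m) ≤
      Real.exp (-(gammaFn β p Q τ)) - Real.exp (-(gammaFn β p Q (τ + h))) := by
    have hx := Real.add_one_le_exp (gammaFn β p Q (τ + h) - gammaFn β p Q τ)
    have hmul : Real.exp (-(gammaFn β p Q τ)) = Real.exp (-(gammaFn β p Q (τ + h))) *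
        Real.exp (gammaFn β p Q (τ + h) - gammaFn β p Q τ) := by
      rw [← Real.exp_add]; congr 1; ring
    have h0 := Real.exp_pos (-(gammaFn β p Q (τ + h)))
    rw [hmul]
    have hCm := mul_nonneg hC hm
    nlinarith [mul_le_mul_of_nonneg_left (hS.trans (le_sub_iff_add_le.2 hx)) h0.le,
      mul_le_mul_of_nonneg_right a2 hCm]
  obtain ⟨q0, q1⟩ := hQ.1 v (k + 1) (τ + h) hτh
  have hpv := hp v
  have hlv := hlam v
  have ha := Real.exp_pos (-(gammaFn β p Q τ))
  generalize Real.exp (-(gammaFn β p Q τ)) = a at *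
  generalize Real.exp (-(gammaFn β p Q (τ + h))) = b at *
  generalize (∑ w, β w * p w) = C at *
  have hCm := mul_nonneg hC hm
  have t1 : -(lam v * m) ≤ lam v * (massGap Q h v k τ - massGap Q h v (k + 1) τ) := by
    have := mul_le_mul_of_nonneg_left
      (show -m ≤ massGap Q h v k τ - massGap Q h v (k + 1) τ by linarith [hD v k]) hlv.le
    linarith
  have t2 : -(p v * m) ≤ p v * (a * (massGap Q h v (k + 1 + 1) τ - massGap Q h v (k + 1) τ)) := by
    have h1 := mul_le_mul_of_nonneg_left
      (show -m ≤ massGap Q h v (k + 1 + 1) τ - massGap Q h v (k + 1) τ by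
        linarith [hD v (k + 1 + 1)]) ha.le
    have h2 := mul_le_mul_of_nonneg_right a1 hm
    have := mul_le_mul_of_nonneg_left
      (show -m ≤ a * (massGap Q h v (k + 1 + 1) τ - massGap Q h v (k + 1) τ) by linarith) hpv.le
    linarith
  have t3 : -(p v * (C * m)) ≤ p v * ((a - b) * Q v (k + 1) (τ + h)) := by
    have h1 := mul_le_mul_of_nonneg_right hE q0
    have h2 := mul_le_mul_of_nonneg_left q1 hCm
    have := mul_le_mul_of_nonneg_left
      (show -(C * m) ≤ (a - b) * Q v (k + 1) (τ + h) by linarith) hpv.le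
    linarith
  have e1' : massGap Q h v k τ - massGap Q h v (k + 1) τ = -(Q v k τ - Q v k (τ + h)) := by
    linarith
  rw [e1'] at t1
  rw [e2] at t2
  linarith

/-- One contraction step: the exponentially weighted lower bound on all gaps can be halved. -/
lemma gap_halving (hβ : ∀ v, 0 < β v) (hp : ∀ v, 0 < p v) (hlam : ∀ v, 0 < lam v)
    (hQ : IsMFSolution β p lam Q) {h : ℝ} (hh : 0 ≤ h)
    (h0 : ∀ v k, 0 ≤ massGap Q h v k 0) {K M : ℝ} (hM : 0 < M)
    (hK : ∀ v, lam v + p v + p v * ∑ w, β w * p w ≤ K)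
    (hD : ∀ τ, 0 ≤ τ → ∀ v k, -(M * Real.exp ((2 * K + 1) * τ)) ≤ massGap Q h v k τ) :
    ∀ τ, 0 ≤ τ → ∀ v k, -(M / 2 * Real.exp ((2 * K + 1) * τ)) ≤ massGap Q h v k τ := by
  intro T hT v k
  cases k with
  | zero =>
    simp only [massGap, cumMass, Finset.range_zero, Finset.sum_empty, sub_zero]
    have := Real.exp_pos ((2 * K + 1) * T)
    have := mul_pos (half_pos hM) this
    linarith
  | succ k =>
    have hB : ∀ x : ℝ, HasDerivAt (fun t => M / 2 * Real.exp ((2 * K + 1) * t))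
        (M / 2 * (Real.exp ((2 * K + 1) * x) * (2 * K + 1))) x := fun x => by
      have := (((hasDerivAt_id x).const_mul (2 * K + 1)).exp).const_mul (M / 2)
      simpa using this
    have key := image_le_of_deriv_right_lt_deriv_boundary (a := 0) (b := T)
      (f := fun t => -massGap Q h v (k + 1) t)
      (fun x hx => ((massGap_hasDerivWithinAt hQ hh v k hx.1).neg.continuousWithinAt).mono
        Set.Icc_subset_Ici_self)
      (fun x hx => ((massGap_hasDerivWithinAt hQ hh v k hx.1).neg).mono
        (Set.Ici_subset_Ici.2 hx.1))
      (B := fun t => M / 2 * Real.exp ((2 * K + 1) * t))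
      (by have := h0 v (k + 1); simp; linarith) hB ?_ (Set.right_mem_Icc.2 hT)
    · linarith
    · intro x hx hfx
      have hE := Real.exp_pos ((2 * K + 1) * x)
      have hME := mul_pos hM hE
      have hl := massGap_deriv_lower hβ hp hlam hQ hh v k hx.1 hME.le (hD x hx.1)
        (by linarith)
      have := mul_le_mul_of_nonneg_right (hK v) hME.le
      linarith

end

/-- Lemma 1 (second part): a solution of the mean-field slotted-Aloha dynamical
system started from the empty state is stochastically increasing in time:
for all `τ, h ≥ 0` and every class `v`, `Q(τ)(v,·) ≤_st Q(τ+h)(v,·)`. -/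
theorem aloha_meanfield_increasing_from_empty
    {V : Type*} [Fintype V]
    (β p lam : V → ℝ)
    (hβ : ∀ v, 0 < β v) (hp : ∀ v, 0 < p v) (hlam : ∀ v, 0 < lam v)
    (hβsum : ∑ v, β v = 1)
    (Q : V → ℕ → ℝ → ℝ) (hQ : IsMFSolution β p lam Q)
    (hempty : ∀ v, ∀ k : ℕ, Q v k 0 = if k = 0 then 1 else 0) :
    ∀ τ, 0 ≤ τ → ∀ h, 0 ≤ h → ∀ v, ∀ k : ℕ,
      ∑ l ∈ Finset.range (k+1), Q v l (τ + h) ≤ ∑ l ∈ Finset.range (k+1), Q v l τ := by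
  intro τ hτ h hh v k
  have h0 : ∀ v k, 0 ≤ massGap Q h v k 0 := by
    intro v k
    cases k with
    | zero => simp [massGap, cumMass]
    | succ k =>
      have h1 := (cumMass_mem_Icc hQ v (k + 1) (add_nonneg le_rfl hh)).2
      have h2 : cumMass Q v (k + 1) 0 = 1 := by simp [cumMass, hempty]
      unfold massGap
      linarith
  obtain ⟨K, hK⟩ : ∃ K : ℝ, 0 ≤ K ∧ ∀ v, lam v + p v + p v * ∑ w, β w * p w ≤ K := by
    have hnn : ∀ v, 0 ≤ lam v + p v + p v * ∑ w, β w * p w := fun v =>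
      add_nonneg (add_pos (hlam v) (hp v)).le (mul_nonneg (hp v).le
        (Finset.sum_nonneg fun w _ => (mul_pos (hβ w) (hp w)).le))
    exact ⟨∑ v, (lam v + p v + p v * ∑ w, β w * p w), Finset.sum_nonneg fun v _ => hnn v,
      fun v => Finset.single_le_sum (fun w _ => hnn w) (Finset.mem_univ v)⟩
  have hiter : ∀ n : ℕ, ∀ τ, 0 ≤ τ → ∀ v k,
      -((1 / 2 : ℝ) ^ n * Real.exp ((2 * K + 1) * τ)) ≤ massGap Q h v k τ := by
    intro n
    induction n with
    | zero =>
      intro τ hτ v k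
      have h1 := (cumMass_mem_Icc hQ v k hτ).1
      have h2 := (cumMass_mem_Icc hQ v k (add_nonneg hτ hh)).2
      have h3 : 1 ≤ Real.exp ((2 * K + 1) * τ) :=
        Real.one_le_exp (mul_nonneg (by linarith [hK.1]) hτ)
      unfold massGap
      linarith
    | succ n ih =>
      have := gap_halving hβ hp hlam hQ hh h0 (M := (1 / 2 : ℝ) ^ n) (by positivity) hK.2 ih
      rwa [show (1 / 2 : ℝ) ^ (n + 1) = (1 / 2 : ℝ) ^ n / 2 by ring]
  have hlim : Tendsto (fun n : ℕ => -((1 / 2 : ℝ) ^ n * Real.exp ((2 * K + 1) * τ)))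
      atTop (nhds 0) := by
    simpa using ((tendsto_pow_atTop_nhds_zero_of_lt_one (r := (1 / 2 : ℝ)) (by norm_num)
      (by norm_num)).mul_const (Real.exp ((2 * K + 1) * τ))).neg
  have hfin : 0 ≤ massGap Q h v (k + 1) τ :=
    le_of_tendsto' hlim fun n => hiter n τ hτ v (k + 1)
  exact sub_nonneg.1 hfin
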